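/- Let 0 < λ ≤ Λ and Λ₀ > 0, and let A : closure(B₁(0)) × ℝ → (3×3 symmetric matrices) be measurable with λ|ξ|² ≤ ξᵀ A(x) ξ ≤ Λ|ξ|² for all x and all ξ ∈ ℝ³. Assume the Poincaré inequality on the unit disk: for every C¹ function w on closure(B₁(0)), ‖w − (average of w over B₁(0))‖_{L²(B₁(0))} ≤ Λ₀ ‖∇w‖_{L²(B₁(0))}. Suppose Φ is C¹ on closure(B₁(0)) × ℝ with ∫_{B₁(0) × ℝ} (A ∇Φ) · ∇ψ dx = 0 for every C¹ function ψ : ℝ³ → ℝ with compact support, and ∫_{B₁(0)} (A ∇Φ)(x′, t) · e₃ dx′ = 0 for every t ∈ ℝ. Then there exists β > 0, depending only on λ, Λ and Λ₀, such that for all real t₁ ≤ t₂ and all h > 0 one has e^{β h} ∫_{B₁(0) × [t₁, t₂]} |∇Φ|² dx ≤ ∫_{B₁(0) × [t₁ − h, t₂ + h]} |∇Φ|² dx. -/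

import Mathlib

open Real Set MeasureTheory

/-- Gradient of a scalar function on ℝ³. -/
noncomputable def grad3 (φ : (Fin 3 → ℝ) → ℝ) (x : Fin 3 → ℝ) : Fin 3 → ℝ :=
  fun i => fderiv ℝ φ x (Pi.single i 1)

/-- Squared Euclidean length of a vector of ℝ³. -/
noncomputable def normSq3 (u : Fin 3 → ℝ) : ℝ := ∑ i, (u i) ^ 2

/-- The open unit disk in ℝ². -/
def diskSet : Set (Fin 2 → ℝ) := {x' | (x' 0) ^ 2 + (x' 1) ^ 2 < 1}

/-- The open infinite cylinder B₁(0) × ℝ ⊂ ℝ³. -/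
def cylZ : Set (Fin 3 → ℝ) := {y | (y 0) ^ 2 + (y 1) ^ 2 < 1}

/-- The closed infinite cylinder closure(B₁(0)) × ℝ ⊂ ℝ³. -/
def cylZc : Set (Fin 3 → ℝ) := {y | (y 0) ^ 2 + (y 1) ^ 2 ≤ 1}

/-! The equation is tested with `Φ (ζ - 1)`, where the weight `ζ` depends on the axial variable
only, equals `e ^ (β h)` on the inner slab and `1` outside the outer one, and satisfies
`|ζ'| ≤ C β ζ`. This leaves the energy weighted with `ζ - 1`, and `ζ'` times the integral of
`Φ (A ∇Φ) · e₃` over cross-sections. As the flux through each cross-section vanishes, a constant may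
be subtracted from `Φ` there, and the Poincaré inequality bounds the integral by the energy
of the cross-section. For small `β` the flux term is thus dominated by the energy with weight
`ζ` in the transition layers, whence `∫ (ζ - 1) |∇Φ|²` over the inner slab is at most
`∫ |∇Φ|²` over the layers.

Since `Φ` is `C¹` on the closed cylinder only, `Φ (ζ - 1)` is not itself a test function. As the
cylinder is convex, it can be approximated by dilating `Φ` towards an interior point, which yields
functions that are `C¹` across the lateral boundary.
-/

open Matrix in
theorem mulVec_dotProduct_mulVec_le {ι : Type*} [Fintype ι] {a : Matrix ι ι ℝ} {Λ : ℝ}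
    (hsymm : a.IsSymm) (hnonneg : ∀ ξ, 0 ≤ ξ ⬝ᵥ a *ᵥ ξ)
    (hle : ∀ ξ, ξ ⬝ᵥ a *ᵥ ξ ≤ Λ * (ξ ⬝ᵥ ξ)) (ξ : ι → ℝ) :
    a *ᵥ ξ ⬝ᵥ a *ᵥ ξ ≤ Λ ^ 2 * (ξ ⬝ᵥ ξ) := by
  classical
  set η := a *ᵥ ξ with hη
  have hadjoint : ξ ⬝ᵥ a *ᵥ η = η ⬝ᵥ η := by
    rw [dotProduct_mulVec, ← mulVec_transpose, hsymm.eq]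
  have cauchy_schwarz : (η ⬝ᵥ η) * (η ⬝ᵥ η) ≤ (η ⬝ᵥ a *ᵥ η) * (ξ ⬝ᵥ a *ᵥ ξ) := by
    simpa only [toBilin'_apply', ← hη, hadjoint] using
      (toBilin' a).apply_mul_apply_le_of_forall_zero_le
        (by simpa only [toBilin'_apply'] using hnonneg) η ξ
  have hη_nonneg : 0 ≤ η ⬝ᵥ η := by simpa using dotProduct_self_star_nonneg η
  have hξ_nonneg : 0 ≤ ξ ⬝ᵥ ξ := by simpa using dotProduct_self_star_nonneg ξ
  rcases hη_nonneg.eq_or_lt with h | hη_pos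
  · rw [← h]
    positivity
  · refine le_of_mul_le_mul_left ?_ hη_pos
    calc (η ⬝ᵥ η) * (η ⬝ᵥ η) ≤ (η ⬝ᵥ a *ᵥ η) * (ξ ⬝ᵥ a *ᵥ ξ) := cauchy_schwarz
      _ ≤ (Λ * (η ⬝ᵥ η)) * (Λ * (ξ ⬝ᵥ ξ)) :=
        mul_le_mul (hle η) (hle ξ) (hnonneg ξ) ((hnonneg η).trans (hle η))
      _ = (η ⬝ᵥ η) * (Λ ^ 2 * (ξ ⬝ᵥ ξ)) := by ring

section Integral

variable {α : Type*} [MeasurableSpace α] {μ : Measure α} {f g : α → ℝ}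

theorem sq_integral_mul_le (hf : MemLp f 2 μ) (hg : MemLp g 2 μ) :
    (∫ x, f x * g x ∂μ) ^ 2 ≤ (∫ x, f x ^ 2 ∂μ) * ∫ x, g x ^ 2 ∂μ := by
  have hquadratic (s : ℝ) : ∫ x, (s * f x + g x) ^ 2 ∂μ =
      (∫ x, f x ^ 2 ∂μ) * (s * s) + (2 * ∫ x, f x * g x ∂μ) * s + ∫ x, g x ^ 2 ∂μ := by
    have hexpand (x : α) : (s * f x + g x) ^ 2 =
        s * s * f x ^ 2 + 2 * s * (f x * g x) + g x ^ 2 := by ring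
    have hff : Integrable (fun x ↦ s * s * f x ^ 2) μ := hf.integrable_sq.const_mul _
    have hfg : Integrable (fun x ↦ 2 * s * (f x * g x)) μ := (hf.integrable_mul hg).const_mul _
    calc ∫ x, (s * f x + g x) ^ 2 ∂μ
        = ∫ x, s * s * f x ^ 2 + 2 * s * (f x * g x) ∂μ + ∫ x, g x ^ 2 ∂μ := by
          simp only [hexpand]
          exact integral_add (hff.add hfg) hg.integrable_sq
      _ = _ := by
          rw [integral_add hff hfg, integral_const_mul, integral_const_mul]
          ring
  have := discrim_le_zero fun s ↦ (hquadratic s).symm ▸ integral_nonneg fun x ↦ sq_nonneg _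
  rw [discrim] at this
  linarith

theorem sq_integral_mul_le_of_integral_eq_zero [IsFiniteMeasure μ] (hf : MemLp f 2 μ)
    (hg : MemLp g 2 μ) (hg_mean : ∫ x, g x ∂μ = 0) (m : ℝ) :
    (∫ x, f x * g x ∂μ) ^ 2 ≤ (∫ x, (f x - m) ^ 2 ∂μ) * ∫ x, g x ^ 2 ∂μ := by
  have hsub : ∫ x, (f x - m) * g x ∂μ = ∫ x, f x * g x ∂μ := by
    calc ∫ x, (f x - m) * g x ∂μ = ∫ x, f x * g x ∂μ - ∫ x, m * g x ∂μ := by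
          simp only [sub_mul]
          exact integral_sub (hf.integrable_mul hg) ((hg.integrable one_le_two).const_mul m)
      _ = ∫ x, f x * g x ∂μ := by rw [integral_const_mul, hg_mean, mul_zero, sub_zero]
  exact hsub ▸ sq_integral_mul_le (hf.sub (memLp_const m)) hg

end Integral

section ExpWeight

/-- A smooth version of the weight equal to `exp (β * h)` on `[t₁, t₂]`, to `1` outside
`[t₁ - h, t₂ + h]`, and with logarithmic derivative of order `β` in between. -/
noncomputable def expWeight (β h t₁ t₂ t : ℝ) : ℝ :=
  exp (β * h * (smoothTransition (1 + (t - t₁) / h) * smoothTransition (1 + (t₂ - t) / h)))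

theorem exists_forall_abs_deriv_smoothTransition_le :
    ∃ D > 0, ∀ t, |deriv smoothTransition t| ≤ D := by
  have hsupport (t : ℝ) (ht : t ∉ Icc 0 1) : deriv smoothTransition t = 0 := by
    rcases not_and_or.1 ht with ht | ht
    · refine IsLocalMin.deriv_eq_zero (Filter.Eventually.of_forall fun s ↦ ?_)
      rw [smoothTransition.zero_of_nonpos (not_le.1 ht).le]
      exact smoothTransition.nonneg s
    · refine IsLocalMax.deriv_eq_zero (Filter.Eventually.of_forall fun s ↦ ?_)
      rw [smoothTransition.one_of_one_le (not_le.1 ht).le]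
      exact smoothTransition.le_one s
  have hcont : Continuous (deriv smoothTransition) :=
    (smoothTransition.contDiff (n := 1)).continuous_deriv le_rfl
  obtain ⟨D, hD⟩ :=
    (HasCompactSupport.intro isCompact_Icc hsupport).exists_bound_of_continuous hcont
  exact ⟨|D| + 1, by positivity, fun t ↦ (hD t).trans (by linarith [le_abs_self D])⟩

variable {β h t₁ t₂ t : ℝ}

theorem contDiff_expWeight {n : ℕ∞} : ContDiff ℝ n (expWeight β h t₁ t₂) := by
  unfold expWeight
  exact contDiff_exp.comp <| contDiff_const.mul <|
    (smoothTransition.contDiff.comp (by fun_prop)).mul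
      (smoothTransition.contDiff.comp (by fun_prop))

theorem one_le_expWeight (hβ : 0 ≤ β) (hh : 0 ≤ h) : 1 ≤ expWeight β h t₁ t₂ t :=
  one_le_exp (mul_nonneg (mul_nonneg hβ hh)
    (mul_nonneg (smoothTransition.nonneg _) (smoothTransition.nonneg _)))

theorem expWeight_le (hβ : 0 ≤ β) (hh : 0 ≤ h) : expWeight β h t₁ t₂ t ≤ exp (β * h) :=
  exp_le_exp.2 <| mul_le_of_le_one_right (mul_nonneg hβ hh) <|
    mul_le_one₀ (smoothTransition.le_one _) (smoothTransition.nonneg _) (smoothTransition.le_one _)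

theorem expWeight_of_mem (hh : 0 < h) (ht : t ∈ Icc t₁ t₂) :
    expWeight β h t₁ t₂ t = exp (β * h) := by
  have hleft : 1 ≤ 1 + (t - t₁) / h :=
    le_add_of_nonneg_right (div_nonneg (sub_nonneg.2 ht.1) hh.le)
  have hright : 1 ≤ 1 + (t₂ - t) / h :=
    le_add_of_nonneg_right (div_nonneg (sub_nonneg.2 ht.2) hh.le)
  rw [expWeight, smoothTransition.one_of_one_le hleft, smoothTransition.one_of_one_le hright,
    mul_one, mul_one]

theorem expWeight_of_notMem (hh : 0 < h) (ht : t ∉ Icc (t₁ - h) (t₂ + h)) :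
    expWeight β h t₁ t₂ t = 1 := by
  rcases not_and_or.1 ht with ht | ht
  · have hleft : 1 + (t - t₁) / h ≤ 0 := by
      rw [one_add_div hh.ne']
      exact div_nonpos_of_nonpos_of_nonneg (by linarith) hh.le
    simp [expWeight, smoothTransition.zero_of_nonpos hleft]
  · have hright : 1 + (t₂ - t) / h ≤ 0 := by
      rw [one_add_div hh.ne']
      exact div_nonpos_of_nonpos_of_nonneg (by linarith) hh.le
    simp [expWeight, smoothTransition.zero_of_nonpos hright]

theorem deriv_expWeight_of_mem (hβ : 0 ≤ β) (hh : 0 < h) (ht : t ∈ Icc t₁ t₂) :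
    deriv (expWeight β h t₁ t₂) t = 0 := by
  refine IsLocalMax.deriv_eq_zero (Filter.Eventually.of_forall fun s ↦ ?_)
  rw [expWeight_of_mem hh ht]
  exact expWeight_le hβ hh.le

theorem deriv_expWeight_of_notMem (hβ : 0 ≤ β) (hh : 0 < h)
    (ht : t ∉ Icc (t₁ - h) (t₂ + h)) : deriv (expWeight β h t₁ t₂) t = 0 := by
  refine IsLocalMin.deriv_eq_zero (Filter.Eventually.of_forall fun s ↦ ?_)
  rw [expWeight_of_notMem hh ht]
  exact one_le_expWeight hβ hh.le

theorem hasDerivAt_expWeight (hh : h ≠ 0) :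
    HasDerivAt (expWeight β h t₁ t₂) (expWeight β h t₁ t₂ t * (β *
      (deriv smoothTransition (1 + (t - t₁) / h) * smoothTransition (1 + (t₂ - t) / h) -
        smoothTransition (1 + (t - t₁) / h) * deriv smoothTransition (1 + (t₂ - t) / h)))) t := by
  have hS (s : ℝ) : HasDerivAt smoothTransition (deriv smoothTransition s) s :=
    ((smoothTransition.contDiff (n := 1)).differentiable one_ne_zero s).hasDerivAt
  have hleft : HasDerivAt (fun t ↦ 1 + (t - t₁) / h) (1 / h) t :=
    (((hasDerivAt_id t).sub_const t₁).div_const h).const_add 1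
  have hright : HasDerivAt (fun t ↦ 1 + (t₂ - t) / h) (-1 / h) t :=
    (((hasDerivAt_id t).const_sub t₂).div_const h).const_add 1
  refine ((((hS _).comp t hleft).mul ((hS _).comp t hright)).const_mul (β * h)).exp.congr_deriv ?_
  simp only [expWeight, Pi.mul_apply, Function.comp_apply]
  field_simp
  ring

theorem abs_deriv_expWeight_le {D : ℝ} (hD : ∀ s, |deriv smoothTransition s| ≤ D) (hβ : 0 ≤ β)
    (hh : h ≠ 0) : |deriv (expWeight β h t₁ t₂) t| ≤ 2 * D * β * expWeight β h t₁ t₂ t := by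
  have hpos : 0 < expWeight β h t₁ t₂ t := exp_pos _
  have hmul (r s : ℝ) : |deriv smoothTransition r * smoothTransition s| ≤ D := by
    rw [abs_mul, abs_of_nonneg (smoothTransition.nonneg s)]
    exact (mul_le_of_le_one_right (abs_nonneg _) (smoothTransition.le_one s)).trans (hD r)
  have hsub (r s : ℝ) : |deriv smoothTransition r * smoothTransition s
      - smoothTransition r * deriv smoothTransition s| ≤ 2 * D := by
    rw [mul_comm (smoothTransition r), two_mul]
    exact (abs_sub _ _).trans (add_le_add (hmul r s) (hmul s r))
  rw [(hasDerivAt_expWeight hh).deriv, abs_mul, abs_mul, abs_of_pos hpos, abs_of_nonneg hβ,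
    mul_comm (2 * D * β), mul_comm (2 * D)]
  gcongr
  exact hsub _ _

variable {lam K D : ℝ} {e p g : ℝ → ℝ}

theorem indicator_sub_indicator_le_expWeight (hK : 0 < K)
    (hD : ∀ s, |deriv smoothTransition s| ≤ D) (hβ : 0 ≤ β) (hβD : 2 * D * β * K ≤ lam)
    (hh : 0 < h) (hp : lam * e t ≤ p t) (hg : |g t| ≤ K * e t) :
    lam * (exp (β * h) * (Icc t₁ t₂).indicator e t - (Icc (t₁ - h) (t₂ + h)).indicator e t) ≤
      (expWeight β h t₁ t₂ t - 1) * p t + deriv (expWeight β h t₁ t₂) t * g t := by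
  have hsub : Icc t₁ t₂ ⊆ Icc (t₁ - h) (t₂ + h) := Icc_subset_Icc (by linarith) (by linarith)
  by_cases ht : t ∈ Icc (t₁ - h) (t₂ + h)
  · have hdissipation := mul_le_mul_of_nonneg_left hp
      (sub_nonneg.2 (one_le_expWeight (t₁ := t₁) (t₂ := t₂) (t := t) hβ hh.le))
    by_cases hmid : t ∈ Icc t₁ t₂
    · rw [indicator_of_mem ht, indicator_of_mem hmid, deriv_expWeight_of_mem hβ hh hmid]
      rw [expWeight_of_mem hh hmid] at hdissipation ⊢
      linarith
    · set ζ := expWeight β h t₁ t₂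
      have hζ' : |deriv ζ t| ≤ 2 * D * β * ζ t := abs_deriv_expWeight_le hD hβ hh.ne'
      have hζe : 0 ≤ ζ t * e t :=
        mul_nonneg (exp_pos _).le (nonneg_of_mul_nonneg_right ((abs_nonneg _).trans hg) hK)
      have hflux : |deriv ζ t * g t| ≤ lam * (ζ t * e t) := calc
        |deriv ζ t * g t| ≤ (2 * D * β * ζ t) * (K * e t) := by
          rw [abs_mul]
          exact mul_le_mul hζ' hg (abs_nonneg _) ((abs_nonneg _).trans hζ')
        _ = 2 * D * β * K * (ζ t * e t) := by ring
        _ ≤ lam * (ζ t * e t) := by gcongr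
      rw [indicator_of_mem ht, indicator_of_notMem hmid]
      linarith [neg_abs_le (deriv ζ t * g t)]
  · rw [indicator_of_notMem ht, indicator_of_notMem fun h ↦ ht (hsub h),
      deriv_expWeight_of_notMem hβ hh ht, expWeight_of_notMem hh ht]
    simp

theorem exp_mul_setIntegral_Icc_le (hlam : 0 < lam) (hK : 0 < K)
    (hD : ∀ s, |deriv smoothTransition s| ≤ D) (hβ : 0 ≤ β) (hβD : 2 * D * β * K ≤ lam)
    (he : LocallyIntegrable e) (hp : ∀ t, lam * e t ≤ p t) (hg : ∀ t, |g t| ≤ K * e t)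
    (hint : ∀ η : ℝ → ℝ, ContDiff ℝ 1 η → HasCompactSupport η →
      Integrable fun t ↦ η t * p t + deriv η t * g t)
    (hweak : ∀ η : ℝ → ℝ, ContDiff ℝ 1 η → HasCompactSupport η →
      ∫ t, (η t * p t + deriv η t * g t) = 0) (t₁ t₂ : ℝ) (hh : 0 < h) :
    exp (β * h) * ∫ t in Icc t₁ t₂, e t ≤ ∫ t in Icc (t₁ - h) (t₂ + h), e t := by
  set η : ℝ → ℝ := fun t ↦ expWeight β h t₁ t₂ t - 1
  have hη : ContDiff ℝ 1 η := contDiff_expWeight.sub contDiff_const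
  have hη_supp : HasCompactSupport η := .intro (K := Icc (t₁ - h) (t₂ + h)) isCompact_Icc
    fun t ht ↦ by simp only [η, expWeight_of_notMem hh ht, sub_self]
  have hpointwise (t : ℝ) : lam * (exp (β * h) * (Icc t₁ t₂).indicator e t -
      (Icc (t₁ - h) (t₂ + h)).indicator e t) ≤ η t * p t + deriv η t * g t := by
    rw [show deriv η t = deriv (expWeight β h t₁ t₂) t from deriv_sub_const 1]
    exact indicator_sub_indicator_le_expWeight hK hD hβ hβD hh (hp t) (hg t)
  have he_ind (a b : ℝ) : Integrable ((Icc a b).indicator e) :=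
    (he.integrableOn_isCompact isCompact_Icc).integrable_indicator measurableSet_Icc
  have hmono := integral_mono
    ((((he_ind t₁ t₂).const_mul _).sub (he_ind _ _)).const_mul lam) (hint η hη hη_supp) hpointwise
  rw [hweak η hη hη_supp, integral_const_mul, integral_sub' ((he_ind _ _).const_mul _) (he_ind _ _),
    integral_const_mul, integral_indicator measurableSet_Icc,
    integral_indicator measurableSet_Icc] at hmono
  exact sub_nonpos.1 (nonpos_of_mul_nonpos_right hmono hlam)

end ExpWeight

section Approximation

open Filter Topology

variable {E F : Type*} [NormedAddCommGroup E] [NormedSpace ℝ E]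
  [NormedAddCommGroup F] [NormedSpace ℝ F]

theorem exists_contDiff_hasCompactSupport_eventuallyEq [FiniteDimensional ℝ E] {n : ℕ∞}
    {K U : Set E} (hK : IsCompact K) (hU : IsOpen U) (hKU : K ⊆ U) {f : E → F}
    (hf : ContDiffOn ℝ n f U) :
    ∃ g : E → F, ContDiff ℝ n g ∧ HasCompactSupport g ∧ ∀ x ∈ K, g =ᶠ[𝓝 x] f := by
  obtain ⟨L, hL, hKL, hLU⟩ := exists_compact_between hK hU hKU
  obtain ⟨χ, hχK, hχL, -⟩ := exists_contMDiffMap_one_nhds_of_subset_interior (n := n)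
    (modelWithCornersSelf ℝ E) hK.isClosed hKL
  have hzero : ∀ x ∉ L, (χ x • f x) = 0 := fun x hx ↦ by rw [hχL x hx, zero_smul]
  refine ⟨fun x ↦ χ x • f x, ?_, .intro hL hzero, fun x hx ↦ ?_⟩
  · have hsupp : tsupport (fun x ↦ χ x • f x) ⊆ L :=
      closure_minimal (Function.support_subset_iff'.2 hzero) hL.isClosed
    exact (contMDiff_of_tsupport fun x hx ↦ (χ.contMDiff.contDiff.contDiffAt.smul
      (hf.contDiffAt (hU.mem_nhds (hLU (hsupp hx))))).contMDiffAt).contDiff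
  · filter_upwards [hχK.filter_mono (nhds_le_nhdsSet hx)] with y hy
    rw [hy, one_smul]

theorem exists_mem_Ioc_forall_dist_lt {X Y : Type*} [TopologicalSpace X] [PseudoMetricSpace Y]
    {K : Set X} (hK : IsCompact K) {G : ℝ → X → Y} (hG : ContinuousOn G.uncurry (Icc 0 1 ×ˢ K))
    {ε : ℝ} (hε : 0 < ε) : ∃ t ∈ Ioc (0 : ℝ) 1, ∀ x ∈ K, dist (G t x) (G 0 x) < ε := by
  obtain ⟨v, hv, hvε⟩ := hK.mem_uniformity_of_prod hG (left_mem_Icc.2 zero_le_one)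
    (Metric.dist_mem_uniformity hε)
  rw [nhdsWithin_Icc_eq_nhdsGE zero_lt_one] at hv
  obtain ⟨t, htv, ht⟩ := Filter.nonempty_of_mem
    (inter_mem (nhdsWithin_mono _ Ioi_subset_Ici_self hv) (Ioc_mem_nhdsGT zero_lt_one))
  exact ⟨t, ht, hvε t htv⟩

variable {S K : Set E} {f : E → F} {ε : ℝ}

-- The approximation is a dilation of `f` towards an interior point of `S`.
theorem exists_isOpen_contDiffOn_near_of_convex (hS : Convex ℝ S) (hne : (interior S).Nonempty)
    (hf : ContDiffOn ℝ 1 f S) (hK : IsCompact K) (hKS : K ⊆ S) (hε : 0 < ε) :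
    ∃ U, IsOpen U ∧ K ⊆ U ∧ ∃ g : E → F, ContDiffOn ℝ 1 g U ∧
      ∀ x ∈ K, ‖g x - f x‖ ≤ ε ∧ ‖fderiv ℝ g x - fderivWithin ℝ f S x‖ ≤ ε := by
  obtain ⟨q, hq⟩ := hne
  let H (t : ℝ) (x : E) : E := (1 - t) • x + t • q
  have hmem {t : ℝ} (ht : t ∈ Ioc 0 1) {x : E} (hx : x ∈ S) : H t x ∈ interior S :=
    hS.combo_closure_interior_mem_interior (subset_closure hx) hq (sub_nonneg.2 ht.2) ht.1
      (sub_add_cancel _ _)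
  have hmaps : MapsTo H.uncurry (Icc 0 1 ×ˢ K) S := by
    rintro ⟨t, x⟩ ⟨ht, hx⟩
    rcases ht.1.eq_or_lt with rfl | h0
    · simpa [H] using hKS hx
    · exact interior_subset (hmem ⟨h0, ht.2⟩ (hKS hx))
  have hHcont : ContinuousOn H.uncurry (Icc 0 1 ×ˢ K) := by
    simp only [H, Function.uncurry_def]
    fun_prop
  let jet (t : ℝ) (x : E) : F × (E →L[ℝ] F) := (f (H t x), (1 - t) • fderivWithin ℝ f S (H t x))
  have hjet : ContinuousOn jet.uncurry (Icc 0 1 ×ˢ K) :=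
    (hf.continuousOn.comp hHcont hmaps).prodMk <|
      (by fun_prop : ContinuousOn (fun p : ℝ × E ↦ 1 - p.1) _).smul
        ((hf.continuousOn_fderivWithin (uniqueDiffOn_convex hS ⟨q, hq⟩) le_rfl).comp hHcont hmaps)
  obtain ⟨t, ht, hdist⟩ := exists_mem_Ioc_forall_dist_lt hK hjet hε
  have hH (x : E) : HasFDerivAt (H t) ((1 - t) • ContinuousLinearMap.id ℝ E) x :=
    ((hasFDerivAt_id x).const_smul (1 - t)).add_const _
  refine ⟨H t ⁻¹' interior S, isOpen_interior.preimage (by fun_prop), fun x hx ↦ hmem ht (hKS hx),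
    f ∘ H t, (hf.mono interior_subset).comp (by fun_prop) (mapsTo_preimage _ _), fun x hx ↦ ?_⟩
  have hfderiv : fderiv ℝ (f ∘ H t) x = (1 - t) • fderivWithin ℝ f S (H t x) := by
    have hint := mem_interior_iff_mem_nhds.1 (hmem ht (hKS hx))
    rw [fderivWithin_of_mem_nhds hint, (((hf.contDiffAt hint).differentiableAt
      one_ne_zero).hasFDerivAt.comp x (hH x)).fderiv, ContinuousLinearMap.comp_smul,
      ContinuousLinearMap.comp_id]
  simpa [jet, H, Prod.dist_eq, dist_eq_norm, hfderiv] using (hdist x hx).le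

theorem exists_contDiff_hasCompactSupport_near_of_convex [FiniteDimensional ℝ E]
    (hS : Convex ℝ S) (hne : (interior S).Nonempty) (hf : ContDiffOn ℝ 1 f S) (hK : IsCompact K)
    (hKS : K ⊆ S) (hε : 0 < ε) :
    ∃ g : E → F, ContDiff ℝ 1 g ∧ HasCompactSupport g ∧
      ∀ x ∈ K, ‖g x - f x‖ ≤ ε ∧ ‖fderiv ℝ g x - fderivWithin ℝ f S x‖ ≤ ε := by
  obtain ⟨U, hU, hKU, f', hf', hnear⟩ :=
    exists_isOpen_contDiffOn_near_of_convex hS hne hf hK hKS hε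
  obtain ⟨g, hg, hg_supp, hgf⟩ :=
    exists_contDiff_hasCompactSupport_eventuallyEq (n := 1) hK hU hKU hf'
  refine ⟨g, hg, hg_supp, fun x hx ↦ ?_⟩
  rw [(hgf x hx).eq_of_nhds, (hgf x hx).fderiv_eq]
  exact hnear x hx

theorem exists_forall_norm_fderiv_le {C K : Set E} (hC_open : IsOpen C) (hC : Convex ℝ C)
    (hf : ContDiffOn ℝ 1 f (closure C)) (hK : IsCompact (closure C ∩ K)) :
    ∃ B, ∀ x ∈ C ∩ K, ‖fderiv ℝ f x‖ ≤ B := by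
  rcases C.eq_empty_or_nonempty with rfl | hne
  · simp
  have hunique : UniqueDiffOn ℝ (closure C) :=
    uniqueDiffOn_convex hC.closure (hne.mono (hC_open.subset_interior_iff.2 subset_closure))
  obtain ⟨B, hB⟩ := hK.exists_bound_of_continuousOn
    ((hf.continuousOn_fderivWithin hunique le_rfl).mono inter_subset_left)
  refine ⟨B, fun x hx ↦ ?_⟩
  rw [← fderivWithin_of_mem_nhds
    (mem_of_superset (hC_open.mem_nhds hx.1) subset_closure)]
  exact hB x ⟨subset_closure hx.1, hx.2⟩

theorem exists_testFunction_near_mul [FiniteDimensional ℝ E] {C : Set E} (hC_open : IsOpen C)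
    (hC : Convex ℝ C) {f η : E → ℝ} (hf : ContDiffOn ℝ 1 f (closure C)) (hη : ContDiff ℝ 1 η)
    (hη_supp : IsCompact (closure C ∩ tsupport η)) {ε : ℝ} (hε : 0 < ε) :
    ∃ ψ : E → ℝ, ContDiff ℝ 1 ψ ∧ HasCompactSupport ψ ∧ tsupport ψ ⊆ tsupport η ∧
      ∀ x ∈ C ∩ tsupport η, ‖fderiv ℝ ψ x - fderiv ℝ (fun y ↦ f y * η y) x‖ ≤ ε := by
  rcases C.eq_empty_or_nonempty with rfl | hne
  · exact ⟨0, contDiff_const, .zero, by simp [tsupport], by simp⟩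
  obtain ⟨B₀, hB₀⟩ := hη_supp.exists_bound_of_continuousOn hη.continuous.continuousOn
  obtain ⟨B₁, hB₁⟩ := hη_supp.exists_bound_of_continuousOn
    (hη.continuous_fderiv one_ne_zero).continuousOn
  set B := |B₀| + |B₁| + 1
  have hB : 0 < B := by positivity
  obtain ⟨g, hg, hg_supp, hgf⟩ := exists_contDiff_hasCompactSupport_near_of_convex hC.closure
    (hne.mono (hC_open.subset_interior_iff.2 subset_closure)) hf hη_supp inter_subset_left
    (div_pos hε hB)
  refine ⟨fun y ↦ g y * η y, hg.mul hη, hg_supp.mul_right, tsupport_mul_subset_right, ?_⟩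
  rintro x ⟨hxC, hxη⟩
  have hnhds : closure C ∈ 𝓝 x := mem_of_superset (hC_open.mem_nhds hxC) subset_closure
  have hx : x ∈ closure C ∩ tsupport η := ⟨subset_closure hxC, hxη⟩
  obtain ⟨hnear₀, hnear₁⟩ := hgf x hx
  rw [fderivWithin_of_mem_nhds hnhds] at hnear₁
  have hηx := hη.differentiable one_ne_zero x
  rw [fderiv_fun_mul (hg.differentiable one_ne_zero x) hηx,
    fderiv_fun_mul ((hf.contDiffAt hnhds).differentiableAt one_ne_zero) hηx]
  calc ‖g x • fderiv ℝ η x + η x • fderiv ℝ g x - (f x • fderiv ℝ η x + η x • fderiv ℝ f x)‖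
      = ‖(g x - f x) • fderiv ℝ η x + η x • (fderiv ℝ g x - fderiv ℝ f x)‖ := by
        congr 1; module
    _ ≤ ε / B * |B₁| + |B₀| * (ε / B) := by
        refine (norm_add_le _ _).trans ?_
        rw [norm_smul, norm_smul]
        gcongr
        · exact (hB₁ x hx).trans (le_abs_self _)
        · exact (hB₀ x hx).trans (le_abs_self _)
    _ = ε * ((|B₀| + |B₁|) / B) := by ring
    _ ≤ ε := mul_le_of_le_one_right hε.le ((div_le_one hB).2 (by simp [B]))

end Approximation

section WeakForm

variable {E : Type*} [NormedAddCommGroup E] [NormedSpace ℝ E] {C : Set E} {V : E → E} {f η : E → ℝ}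

theorem fderiv_apply_eq_zero_of_tsupport_subset {ψ : E → ℝ} (hψ : tsupport ψ ⊆ tsupport η) :
    ∀ x ∈ C \ (C ∩ tsupport η), fderiv ℝ ψ x (V x) = 0 := fun x hx ↦ by
  rw [fderiv_of_notMem_tsupport ℝ fun h ↦ hx.2 ⟨hx.1, hψ h⟩, zero_apply]

variable [FiniteDimensional ℝ E] [MeasurableSpace E] [BorelSpace E] {μ : Measure E}

theorem integrableOn_fderiv_apply {K : Set E} (hC_open : IsOpen C) (hC : Convex ℝ C)
    (hf : ContDiffOn ℝ 1 f (closure C)) (hK : IsCompact (closure C ∩ K)) (hK_meas : MeasurableSet K)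
    (hV : IntegrableOn V (C ∩ K) μ) : IntegrableOn (fun x ↦ fderiv ℝ f x (V x)) (C ∩ K) μ := by
  obtain ⟨B, hB⟩ := exists_forall_norm_fderiv_le hC_open hC hf hK
  refine (hV.norm.const_mul B).mono' ?_ ?_
  · exact (ContinuousLinearMap.id ℝ (E →L[ℝ] ℝ)).aestronglyMeasurable_comp₂
      (measurable_fderiv ℝ f).aestronglyMeasurable hV.aestronglyMeasurable
  · filter_upwards [ae_restrict_mem (hC_open.measurableSet.inter hK_meas)] with x hx
    exact (fderiv ℝ f x).le_of_opNorm_le (hB x hx) _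

theorem integrableOn_fderiv_mul_apply (hC_open : IsOpen C) (hC : Convex ℝ C)
    (hf : ContDiffOn ℝ 1 f (closure C)) (hη : ContDiff ℝ 1 η)
    (hη_supp : IsCompact (closure C ∩ tsupport η)) (hV : IntegrableOn V (C ∩ tsupport η) μ) :
    IntegrableOn (fun x ↦ fderiv ℝ (fun y ↦ f y * η y) x (V x)) C μ :=
  (integrableOn_fderiv_apply hC_open hC (hf.mul hη.contDiffOn) hη_supp
    (isClosed_tsupport η).measurableSet hV).of_forall_sdiff_eq_zero hC_open.measurableSet
      (fderiv_apply_eq_zero_of_tsupport_subset tsupport_mul_subset_right)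

theorem setIntegral_fderiv_mul_apply_eq_zero (hC_open : IsOpen C) (hC : Convex ℝ C)
    (hf : ContDiffOn ℝ 1 f (closure C)) (hη : ContDiff ℝ 1 η)
    (hη_supp : IsCompact (closure C ∩ tsupport η)) (hV : IntegrableOn V (C ∩ tsupport η) μ)
    (hweak : ∀ ψ : E → ℝ, ContDiff ℝ 1 ψ → HasCompactSupport ψ →
      ∫ x in C, fderiv ℝ ψ x (V x) ∂μ = 0) :
    ∫ x in C, fderiv ℝ (fun y ↦ f y * η y) x (V x) ∂μ = 0 := by
  set T := tsupport η
  have hT : MeasurableSet T := (isClosed_tsupport η).measurableSet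
  have hrestrict (ψ : E → ℝ) (hψ : tsupport ψ ⊆ T) :
      ∫ x in C, fderiv ℝ ψ x (V x) ∂μ = ∫ x in C ∩ T, fderiv ℝ ψ x (V x) ∂μ :=
    setIntegral_eq_of_subset_of_forall_sdiff_eq_zero hC_open.measurableSet inter_subset_left
      (fderiv_apply_eq_zero_of_tsupport_subset hψ)
  have hbound (ε : ℝ) (hε : 0 < ε) :
      ‖∫ x in C, fderiv ℝ (fun y ↦ f y * η y) x (V x) ∂μ‖ ≤ ε * ∫ x in C ∩ T, ‖V x‖ ∂μ := by
    obtain ⟨ψ, hψ, hψ_supp, hψT, hnear⟩ := exists_testFunction_near_mul hC_open hC hf hη hη_supp hε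
    have hint := integrableOn_fderiv_apply hC_open hC (hf.mul hη.contDiffOn) hη_supp hT hV
    have hψ_int := integrableOn_fderiv_apply hC_open hC hψ.contDiffOn hη_supp hT hV
    calc ‖∫ x in C, fderiv ℝ (fun y ↦ f y * η y) x (V x) ∂μ‖
        = ‖∫ x in C ∩ T, (fderiv ℝ ψ x (V x) - fderiv ℝ (fun y ↦ f y * η y) x (V x)) ∂μ‖ := by
          rw [integral_sub hψ_int hint, ← hrestrict ψ hψT, hweak ψ hψ hψ_supp, zero_sub, norm_neg,
            hrestrict _ tsupport_mul_subset_right]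
      _ ≤ ∫ x in C ∩ T, ε * ‖V x‖ ∂μ := by
          refine norm_integral_le_of_norm_le (hV.norm.const_mul ε) ?_
          filter_upwards [ae_restrict_mem (hC_open.measurableSet.inter hT)] with x hx
          exact ContinuousLinearMap.le_of_opNorm_le _ (hnear x hx) (V x)
      _ = ε * ∫ x in C ∩ T, ‖V x‖ ∂μ := integral_const_mul ε _
  have hlim : Filter.Tendsto (fun ε ↦ ε * ∫ x in C ∩ T, ‖V x‖ ∂μ) (nhdsWithin 0 (Ioi 0))
      (nhds 0) :=
    tendsto_nhdsWithin_of_tendsto_nhds (Continuous.tendsto' (by fun_prop) _ _ (zero_mul _))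
  exact norm_le_zero_iff.1 (ge_of_tendsto hlim (eventually_mem_nhdsWithin.mono hbound))

end WeakForm

section Cylinder

variable {n : ℕ}

/-- The infinite cylinder with cross-section `ω`, whose axis is the last coordinate. -/
def cyl (ω : Set (Fin n → ℝ)) : Set (Fin (n + 1) → ℝ) := {x | Fin.init x ∈ ω}

variable {ω : Set (Fin n → ℝ)}

theorem snoc_mem_cyl {x' : Fin n → ℝ} {t : ℝ} : Fin.snoc x' t ∈ cyl ω ↔ x' ∈ ω := by
  simp [cyl]

theorem continuous_init : Continuous (Fin.init : (Fin (n + 1) → ℝ) → Fin n → ℝ) :=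
  Continuous.finInit (f := id) continuous_id

theorem isOpen_cyl (hω : IsOpen ω) : IsOpen (cyl ω) :=
  hω.preimage continuous_init

theorem convex_cyl (hω : Convex ℝ ω) : Convex ℝ (cyl ω) := fun _ hx _ hy _ _ ha hb hab ↦
  hω hx hy ha hb hab

theorem closure_cyl : closure (cyl ω) = cyl (closure ω) := by
  refine (continuous_init.closure_preimage_subset ω).antisymm fun x hx ↦ ?_
  rw [← Fin.snoc_init_self x]
  exact map_mem_closure (f := fun x' ↦ Fin.snoc x' (x (Fin.last n))) (by fun_prop) hx fun x' hx' ↦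
    snoc_mem_cyl.2 hx'

theorem isCompact_closure_cyl_inter (hω : Bornology.IsBounded ω) {I : Set ℝ} (hI : IsCompact I) :
    IsCompact (closure (cyl ω) ∩ {x | x (Fin.last n) ∈ I}) := by
  refine ((hω.isCompact_closure.prod hI).image (f := fun p ↦ Fin.snoc p.1 p.2)
    (by fun_prop)).of_isClosed_subset
      (isClosed_closure.inter (hI.isClosed.preimage (continuous_apply _))) fun x hx ↦ ?_
  rw [closure_cyl] at hx
  exact ⟨(Fin.init x, x (Fin.last n)), hx, Fin.snoc_init_self x⟩

theorem volume_cyl_inter_lt_top (hω : Bornology.IsBounded ω) {I : Set ℝ} (hI : IsCompact I) :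
    volume (cyl ω ∩ {x | x (Fin.last n) ∈ I}) < ⊤ :=
  (measure_mono (inter_subset_inter_left _ subset_closure)).trans_lt
    (isCompact_closure_cyl_inter hω hI).measure_lt_top

theorem coe_piFinSuccAbove_last_symm :
    ⇑(MeasurableEquiv.piFinSuccAbove (fun _ : Fin (n + 1) ↦ ℝ) (Fin.last n)).symm =
      fun p ↦ Fin.snoc p.2 p.1 :=
  funext fun p ↦ Fin.insertNth_last' p.1 p.2

theorem measurePreserving_snoc :
    MeasurePreserving fun p : ℝ × (Fin n → ℝ) ↦ (Fin.snoc p.2 p.1 : Fin (n + 1) → ℝ) :=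
  coe_piFinSuccAbove_last_symm ▸ (volume_preserving_piFinSuccAbove _ (Fin.last n)).symm

theorem measurableEmbedding_snoc :
    MeasurableEmbedding fun p : ℝ × (Fin n → ℝ) ↦ (Fin.snoc p.2 p.1 : Fin (n + 1) → ℝ) :=
  coe_piFinSuccAbove_last_symm ▸ MeasurableEquiv.measurableEmbedding _

variable {I : Set ℝ} {F : (Fin (n + 1) → ℝ) → ℝ}

theorem snoc_preimage_cyl_inter : (fun p : ℝ × (Fin n → ℝ) ↦ (Fin.snoc p.2 p.1 : Fin (n + 1) → ℝ))
    ⁻¹' (cyl ω ∩ {x | x (Fin.last n) ∈ I}) = I ×ˢ ω := by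
  ext p
  simp [snoc_mem_cyl, and_comm]

theorem integrableOn_comp_snoc (hF : IntegrableOn F (cyl ω ∩ {x | x (Fin.last n) ∈ I})) :
    IntegrableOn (fun p : ℝ × (Fin n → ℝ) ↦ F (Fin.snoc p.2 p.1)) (I ×ˢ ω) := by
  rw [← snoc_preimage_cyl_inter]
  exact (measurePreserving_snoc.integrableOn_comp_preimage measurableEmbedding_snoc).2 hF

theorem integrableOn_setIntegral_snoc
    (hF : IntegrableOn F (cyl ω ∩ {x | x (Fin.last n) ∈ I})) :
    IntegrableOn (fun t ↦ ∫ x' in ω, F (Fin.snoc x' t)) I := by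
  have hprod := integrableOn_comp_snoc hF
  rw [IntegrableOn, Measure.volume_eq_prod, ← Measure.prod_restrict] at hprod
  exact hprod.integral_prod_left

theorem setIntegral_setIntegral_snoc
    (hF : IntegrableOn F (cyl ω ∩ {x | x (Fin.last n) ∈ I})) :
    ∫ t in I, ∫ x' in ω, F (Fin.snoc x' t) = ∫ x in cyl ω ∩ {x | x (Fin.last n) ∈ I}, F x := by
  rw [← measurePreserving_snoc.setIntegral_preimage_emb measurableEmbedding_snoc,
    snoc_preimage_cyl_inter]
  exact (setIntegral_prod _ (integrableOn_comp_snoc hF)).symm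

theorem contDiff_snoc (t : ℝ) {m : WithTop ℕ∞} :
    ContDiff ℝ m fun x' : Fin n → ℝ ↦ (Fin.snoc x' t : Fin (n + 1) → ℝ) := by
  refine contDiff_pi.2 (Fin.lastCases ?_ fun i ↦ ?_)
  · simpa using contDiff_const
  · simpa using contDiff_apply ℝ ℝ i

/-- The squared Euclidean length of the gradient. It is written in coordinates since `Fin n → ℝ`
carries the supremum norm, whose dual norm is not the Euclidean length. -/
noncomputable def gradSq (f : (Fin n → ℝ) → ℝ) (x : Fin n → ℝ) : ℝ :=
  ∑ i, (fderiv ℝ f x (Pi.single i 1)) ^ 2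

theorem gradSq_nonneg (f : (Fin n → ℝ) → ℝ) (x : Fin n → ℝ) : 0 ≤ gradSq f x :=
  Finset.sum_nonneg fun _ _ ↦ sq_nonneg _

theorem measurable_gradSq (f : (Fin n → ℝ) → ℝ) : Measurable (gradSq f) :=
  Finset.measurable_sum _ fun i _ ↦ (measurable_fderiv_apply_const ℝ f (Pi.single i 1)).pow_const 2

theorem gradSq_le (f : (Fin n → ℝ) → ℝ) (x : Fin n → ℝ) :
    gradSq f x ≤ n * ‖fderiv ℝ f x‖ ^ 2 := by
  have hcoord (i : Fin n) : (fderiv ℝ f x (Pi.single i 1)) ^ 2 ≤ ‖fderiv ℝ f x‖ ^ 2 := by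
    have hsingle := (fderiv ℝ f x).le_opNorm (Pi.single i 1)
    rw [Pi.norm_single, norm_one, mul_one] at hsingle
    exact sq_le_sq.2 (by simpa using hsingle)
  simpa [gradSq] using Finset.sum_le_sum fun i (_ : i ∈ Finset.univ) ↦ hcoord i

theorem fderiv_comp_snoc_single {Φ : (Fin (n + 1) → ℝ) → ℝ} {x' : Fin n → ℝ} {t : ℝ}
    (hΦ : DifferentiableAt ℝ Φ (Fin.snoc x' t)) (i : Fin n) :
    fderiv ℝ (fun y' ↦ Φ (Fin.snoc y' t)) x' (Pi.single i 1) =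
      fderiv ℝ Φ (Fin.snoc x' t) (Pi.single i.castSucc 1) := by
  have hsnoc := (contDiff_snoc t (m := 1)).differentiable one_ne_zero x'
  have hcomp : DifferentiableAt ℝ (fun y' ↦ Φ (Fin.snoc y' t)) x' := hΦ.comp x' hsnoc
  rw [← hcomp.lineDeriv_eq_fderiv, ← hΦ.lineDeriv_eq_fderiv]
  simp only [lineDeriv]
  congr 1 with s
  congr 1
  refine funext (Fin.lastCases ?_ fun j ↦ ?_)
  · simp
  · simp [Pi.single_apply]

theorem gradSq_comp_snoc_le {Φ : (Fin (n + 1) → ℝ) → ℝ} {x' : Fin n → ℝ} {t : ℝ}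
    (hΦ : DifferentiableAt ℝ Φ (Fin.snoc x' t)) :
    gradSq (fun y' ↦ Φ (Fin.snoc y' t)) x' ≤ gradSq Φ (Fin.snoc x' t) := by
  simp only [gradSq, fderiv_comp_snoc_single hΦ]
  rw [Fin.sum_univ_castSucc]
  exact le_add_of_nonneg_right (sq_nonneg _)

end Cylinder

section EllipticFlux

variable {n : ℕ} {ω : Set (Fin n → ℝ)} {lam Lam Λ₀ t : ℝ} {Φ : (Fin (n + 1) → ℝ) → ℝ}
  {V : (Fin (n + 1) → ℝ) → Fin (n + 1) → ℝ} {I : Set ℝ} {η : ℝ → ℝ}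

/-- The Poincaré inequality on `ω` for functions that are `C¹` up to the boundary, with the
quantities on both sides squared. -/
def PoincareInequality (ω : Set (Fin n → ℝ)) (Λ₀ : ℝ) : Prop :=
  ∀ w : (Fin n → ℝ) → ℝ, ContDiffOn ℝ 1 w (closure ω) →
    ∫ x' in ω, (w x' - (∫ y' in ω, w y') / (volume ω).toReal) ^ 2 ≤ Λ₀ ^ 2 * ∫ x' in ω, gradSq w x'

/-- The vector field `V` is related to `∇Φ` on the cylinder over `ω` as `A ∇Φ` is for a measurable
symmetric matrix field with `lam ≤ A ≤ Lam`. -/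
structure IsEllipticFlux (lam Lam : ℝ) (ω : Set (Fin n → ℝ)) (Φ : (Fin (n + 1) → ℝ) → ℝ)
    (V : (Fin (n + 1) → ℝ) → Fin (n + 1) → ℝ) : Prop where
  measurable : Measurable V
  coercive : ∀ x ∈ cyl ω, lam * gradSq Φ x ≤ fderiv ℝ Φ x (V x)
  bounded : ∀ x ∈ cyl ω, ∑ i, V x i ^ 2 ≤ Lam ^ 2 * gradSq Φ x

theorem norm_le_sqrt_sum_sq {ι : Type*} [Fintype ι] (v : ι → ℝ) : ‖v‖ ≤ √(∑ i, v i ^ 2) :=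
  (pi_norm_le_iff_of_nonneg (sqrt_nonneg _)).2 fun i ↦
    abs_le_sqrt (Finset.single_le_sum (f := fun j ↦ v j ^ 2) (fun _ _ ↦ sq_nonneg _)
      (Finset.mem_univ i))

theorem fderiv_apply_eq_sum {m : ℕ} (f : (Fin m → ℝ) → ℝ) (x v : Fin m → ℝ) :
    fderiv ℝ f x v = ∑ i, v i * fderiv ℝ f x (Pi.single i 1) := by
  conv_lhs => rw [pi_eq_sum_univ' v]
  simp [map_sum]

theorem fderiv_mul_comp_last_apply {x : Fin (n + 1) → ℝ} (hΦ : DifferentiableAt ℝ Φ x)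
    (hη : DifferentiableAt ℝ η (x (Fin.last n))) (v : Fin (n + 1) → ℝ) :
    fderiv ℝ (fun y ↦ Φ y * η (y (Fin.last n))) x v =
      η (x (Fin.last n)) * fderiv ℝ Φ x v +
        deriv η (x (Fin.last n)) * (Φ x * v (Fin.last n)) := by
  have hlast := hη.hasDerivAt.comp_hasFDerivAt x
    (ContinuousLinearMap.proj (R := ℝ) (φ := fun _ ↦ ℝ) (Fin.last n)).hasFDerivAt
  have hmul : HasFDerivAt (fun y ↦ Φ y * η (y (Fin.last n))) _ x := hΦ.hasFDerivAt.mul hlast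
  rw [hmul.fderiv]
  simp only [add_apply, smul_apply, ContinuousLinearMap.proj_apply, smul_eq_mul]
  ring

theorem isCompact_closure_inter_tsupport_comp_last (hω_bdd : Bornology.IsBounded ω)
    (hη : HasCompactSupport η) :
    IsCompact (closure (cyl ω) ∩ tsupport fun y ↦ η (y (Fin.last n))) :=
  (isCompact_closure_cyl_inter hω_bdd hη).of_isClosed_subset
    (isClosed_closure.inter (isClosed_tsupport _))
    (inter_subset_inter_right _ (tsupport_comp_subset_preimage η (continuous_apply _)))

theorem differentiableAt_of_mem_cyl (hω : IsOpen ω) (hΦ : ContDiffOn ℝ 1 Φ (closure (cyl ω)))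
    {x : Fin (n + 1) → ℝ} (hx : x ∈ cyl ω) : DifferentiableAt ℝ Φ x :=
  (hΦ.contDiffAt (Filter.mem_of_superset ((isOpen_cyl hω).mem_nhds hx)
    subset_closure)).differentiableAt one_ne_zero

theorem contDiffOn_comp_snoc (hΦ : ContDiffOn ℝ 1 Φ (closure (cyl ω))) (t : ℝ) :
    ContDiffOn ℝ 1 (fun x' ↦ Φ (Fin.snoc x' t)) (closure ω) :=
  hΦ.comp (contDiff_snoc t).contDiffOn fun _ hx' ↦ closure_cyl ▸ snoc_mem_cyl.2 hx'

theorem memLp_comp_snoc {G : (Fin (n + 1) → ℝ) → ℝ} {B : ℝ} {p : ENNReal} (hω : MeasurableSet ω)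
    (hω_bdd : Bornology.IsBounded ω) (hG : Measurable G)
    (hB : ∀ x' ∈ ω, ‖G (Fin.snoc x' t)‖ ≤ B) :
    MemLp (fun x' ↦ G (Fin.snoc x' t)) p (volume.restrict ω) := by
  have : Fact (volume ω < ⊤) := ⟨hω_bdd.measure_lt_top⟩
  exact .of_bound (hG.comp (contDiff_snoc t (m := 0)).continuous.measurable).aestronglyMeasurable B
    ((ae_restrict_mem hω).mono hB)

theorem exists_forall_gradSq_le (hω_open : IsOpen ω) (hω : Convex ℝ ω)
    (hω_bdd : Bornology.IsBounded ω) (hΦ : ContDiffOn ℝ 1 Φ (closure (cyl ω))) (hI : IsCompact I) :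
    ∃ B, ∀ x ∈ cyl ω ∩ {x | x (Fin.last n) ∈ I}, gradSq Φ x ≤ B := by
  obtain ⟨B, hB⟩ := exists_forall_norm_fderiv_le (isOpen_cyl hω_open) (convex_cyl hω) hΦ
    (isCompact_closure_cyl_inter hω_bdd hI)
  refine ⟨(n + 1 : ℕ) * B ^ 2, fun x hx ↦ (gradSq_le Φ x).trans ?_⟩
  gcongr
  exact hB x hx

theorem integrableOn_gradSq (hω_open : IsOpen ω) (hω : Convex ℝ ω)
    (hω_bdd : Bornology.IsBounded ω) (hΦ : ContDiffOn ℝ 1 Φ (closure (cyl ω))) (hI : IsCompact I) :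
    IntegrableOn (gradSq Φ) (cyl ω ∩ {x | x (Fin.last n) ∈ I}) := by
  obtain ⟨B, hB⟩ := exists_forall_gradSq_le hω_open hω hω_bdd hΦ hI
  refine .of_bound (volume_cyl_inter_lt_top hω_bdd hI)
    (measurable_gradSq Φ).aestronglyMeasurable B ?_
  filter_upwards [ae_restrict_mem ((isOpen_cyl hω_open).measurableSet.inter
    (hI.measurableSet.preimage (measurable_pi_apply _)))] with x hx
  rw [Real.norm_of_nonneg (gradSq_nonneg Φ x)]
  exact hB x hx

theorem integrableOn_gradSq_comp_snoc (hω_open : IsOpen ω) (hω : Convex ℝ ω)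
    (hω_bdd : Bornology.IsBounded ω) (hΦ : ContDiffOn ℝ 1 Φ (closure (cyl ω))) (t : ℝ) :
    IntegrableOn (fun x' ↦ gradSq Φ (Fin.snoc x' t)) ω := by
  obtain ⟨B, hB⟩ :=
    exists_forall_gradSq_le hω_open hω hω_bdd hΦ (isCompact_singleton (x := t))
  refine memLp_one_iff_integrable.1 (memLp_comp_snoc (B := B) hω_open.measurableSet hω_bdd
    (measurable_gradSq Φ) fun x' hx' ↦ ?_)
  rw [Real.norm_of_nonneg (gradSq_nonneg Φ _)]
  exact hB _ ⟨snoc_mem_cyl.2 hx', by simp⟩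

theorem memLp_two_comp_snoc (hω_bdd : Bornology.IsBounded ω)
    (hΦ : ContDiffOn ℝ 1 Φ (closure (cyl ω))) (t : ℝ) :
    MemLp (fun x' ↦ Φ (Fin.snoc x' t)) 2 (volume.restrict ω) := by
  have : Fact (volume (closure ω) < ⊤) := ⟨hω_bdd.isCompact_closure.measure_lt_top⟩
  have hcont := (contDiffOn_comp_snoc hΦ t).continuousOn
  obtain ⟨B, hB⟩ := hω_bdd.isCompact_closure.exists_bound_of_continuousOn hcont
  exact (MemLp.of_bound (hcont.aestronglyMeasurable isClosed_closure.measurableSet) B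
    ((ae_restrict_mem isClosed_closure.measurableSet).mono hB)).mono_measure
      (Measure.restrict_mono subset_closure le_rfl)

namespace IsEllipticFlux

theorem exists_forall_norm_le (hV : IsEllipticFlux lam Lam ω Φ V) (hω_open : IsOpen ω)
    (hω : Convex ℝ ω) (hω_bdd : Bornology.IsBounded ω)
    (hΦ : ContDiffOn ℝ 1 Φ (closure (cyl ω))) (hI : IsCompact I) :
    ∃ B, ∀ x ∈ cyl ω ∩ {x | x (Fin.last n) ∈ I}, ‖V x‖ ≤ B := by
  obtain ⟨B, hB⟩ := exists_forall_gradSq_le hω_open hω hω_bdd hΦ hI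
  refine ⟨√(Lam ^ 2 * B), fun x hx ↦ (norm_le_sqrt_sum_sq (V x)).trans (sqrt_le_sqrt ?_)⟩
  exact (hV.bounded x hx.1).trans (mul_le_mul_of_nonneg_left (hB x hx) (sq_nonneg Lam))

theorem integrableOn (hV : IsEllipticFlux lam Lam ω Φ V) (hω_open : IsOpen ω)
    (hω : Convex ℝ ω) (hω_bdd : Bornology.IsBounded ω)
    (hΦ : ContDiffOn ℝ 1 Φ (closure (cyl ω))) (hI : IsCompact I) :
    IntegrableOn V (cyl ω ∩ {x | x (Fin.last n) ∈ I}) := by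
  obtain ⟨B, hB⟩ := hV.exists_forall_norm_le hω_open hω hω_bdd hΦ hI
  exact .of_bound (volume_cyl_inter_lt_top hω_bdd hI) hV.measurable.aestronglyMeasurable B
    ((ae_restrict_mem ((isOpen_cyl hω_open).measurableSet.inter
      (hI.measurableSet.preimage (measurable_pi_apply _)))).mono hB)

theorem memLp_two_snoc (hV : IsEllipticFlux lam Lam ω Φ V) (hω_open : IsOpen ω)
    (hω : Convex ℝ ω) (hω_bdd : Bornology.IsBounded ω)
    (hΦ : ContDiffOn ℝ 1 Φ (closure (cyl ω))) (t : ℝ) (i : Fin (n + 1)) :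
    MemLp (fun x' ↦ V (Fin.snoc x' t) i) 2 (volume.restrict ω) := by
  obtain ⟨B, hB⟩ :=
    hV.exists_forall_norm_le hω_open hω hω_bdd hΦ (isCompact_singleton (x := t))
  exact memLp_comp_snoc (G := fun x ↦ V x i) (B := B) hω_open.measurableSet hω_bdd
    (measurable_pi_iff.1 hV.measurable i) fun x' hx' ↦
      (norm_le_pi_norm _ i).trans (hB _ ⟨snoc_mem_cyl.2 hx', by simp⟩)

theorem integrableOn_fderiv_snoc (hV : IsEllipticFlux lam Lam ω Φ V) (hω_open : IsOpen ω)
    (hω : Convex ℝ ω) (hω_bdd : Bornology.IsBounded ω)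
    (hΦ : ContDiffOn ℝ 1 Φ (closure (cyl ω))) (t : ℝ) :
    IntegrableOn (fun x' ↦ fderiv ℝ Φ (Fin.snoc x' t) (V (Fin.snoc x' t))) ω := by
  obtain ⟨B, hB⟩ := exists_forall_norm_fderiv_le (isOpen_cyl hω_open) (convex_cyl hω) hΦ
    (isCompact_closure_cyl_inter hω_bdd (isCompact_singleton (x := t)))
  have hderiv (i : Fin (n + 1)) :
      MemLp (fun x' ↦ fderiv ℝ Φ (Fin.snoc x' t) (Pi.single i 1)) 2 (volume.restrict ω) := by
    refine memLp_comp_snoc (B := B) hω_open.measurableSet hω_bdd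
      (measurable_fderiv_apply_const ℝ Φ (Pi.single i 1)) fun x' hx' ↦ ?_
    simpa [Pi.norm_single] using (fderiv ℝ Φ (Fin.snoc x' t)).le_of_opNorm_le
      (hB _ ⟨snoc_mem_cyl.2 hx', by simp⟩) (Pi.single i 1)
  refine (integrable_finsetSum Finset.univ fun i _ ↦
    (hV.memLp_two_snoc hω_open hω hω_bdd hΦ t i).integrable_mul (hderiv i)).congr
      (.of_forall fun x' ↦ ?_)
  simpa using (fderiv_apply_eq_sum Φ (Fin.snoc x' t) (V (Fin.snoc x' t))).symm

theorem mul_setIntegral_gradSq_le (hV : IsEllipticFlux lam Lam ω Φ V) (hω_open : IsOpen ω)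
    (hω : Convex ℝ ω) (hω_bdd : Bornology.IsBounded ω)
    (hΦ : ContDiffOn ℝ 1 Φ (closure (cyl ω))) (t : ℝ) :
    lam * ∫ x' in ω, gradSq Φ (Fin.snoc x' t) ≤
      ∫ x' in ω, fderiv ℝ Φ (Fin.snoc x' t) (V (Fin.snoc x' t)) := by
  rw [← integral_const_mul]
  exact setIntegral_mono_on
    ((integrableOn_gradSq_comp_snoc hω_open hω hω_bdd hΦ t).const_mul lam)
    (hV.integrableOn_fderiv_snoc hω_open hω hω_bdd hΦ t) hω_open.measurableSet
    fun x' hx' ↦ hV.coercive _ (snoc_mem_cyl.2 hx')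

-- Since the flux has zero mean, `Φ` may be replaced by its deviation from its mean over the slice.
theorem abs_setIntegral_mul_flux_le (hV : IsEllipticFlux lam Lam ω Φ V) (hω_open : IsOpen ω)
    (hω : Convex ℝ ω) (hω_bdd : Bornology.IsBounded ω)
    (hΦ : ContDiffOn ℝ 1 Φ (closure (cyl ω))) (hLam : 0 ≤ Lam) (hΛ₀ : 0 ≤ Λ₀)
    (hP : PoincareInequality ω Λ₀) (hflux : ∫ x' in ω, V (Fin.snoc x' t) (Fin.last n) = 0) :
    |∫ x' in ω, Φ (Fin.snoc x' t) * V (Fin.snoc x' t) (Fin.last n)| ≤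
      Lam * Λ₀ * ∫ x' in ω, gradSq Φ (Fin.snoc x' t) := by
  have : Fact (volume ω < ⊤) := ⟨hω_bdd.measure_lt_top⟩
  set e := ∫ x' in ω, gradSq Φ (Fin.snoc x' t)
  set φ : (Fin n → ℝ) → ℝ := fun x' ↦ Φ (Fin.snoc x' t)
  have he_int := integrableOn_gradSq_comp_snoc hω_open hω hω_bdd hΦ t
  have he : 0 ≤ e := integral_nonneg fun _ ↦ gradSq_nonneg _ _
  have hslice_grad : ∫ x' in ω, gradSq φ x' ≤ e := by
    refine integral_mono_of_nonneg (.of_forall fun _ ↦ gradSq_nonneg _ _) he_int ?_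
    filter_upwards [ae_restrict_mem hω_open.measurableSet] with x' hx'
    exact gradSq_comp_snoc_le (differentiableAt_of_mem_cyl hω_open hΦ (snoc_mem_cyl.2 hx'))
  have hslice_flux : ∫ x' in ω, V (Fin.snoc x' t) (Fin.last n) ^ 2 ≤ Lam ^ 2 * e := by
    rw [← integral_const_mul]
    refine integral_mono_of_nonneg (.of_forall fun _ ↦ sq_nonneg _) (he_int.const_mul _) ?_
    filter_upwards [ae_restrict_mem hω_open.measurableSet] with x' hx'
    exact (Finset.single_le_sum (f := fun i ↦ V (Fin.snoc x' t) i ^ 2) (fun _ _ ↦ sq_nonneg _)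
      (Finset.mem_univ _)).trans (hV.bounded _ (snoc_mem_cyl.2 hx'))
  refine abs_le_of_sq_le_sq ?_ (by positivity)
  calc (∫ x' in ω, φ x' * V (Fin.snoc x' t) (Fin.last n)) ^ 2
      ≤ (∫ x' in ω, (φ x' - (∫ y' in ω, φ y') / (volume ω).toReal) ^ 2) *
          ∫ x' in ω, V (Fin.snoc x' t) (Fin.last n) ^ 2 :=
        sq_integral_mul_le_of_integral_eq_zero (memLp_two_comp_snoc hω_bdd hΦ t)
          (hV.memLp_two_snoc hω_open hω hω_bdd hΦ t _) hflux _
    _ ≤ (Λ₀ ^ 2 * ∫ x' in ω, gradSq φ x') * (Lam ^ 2 * e) := by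
        exact mul_le_mul (hP φ (contDiffOn_comp_snoc hΦ t)) hslice_flux
          (integral_nonneg fun _ ↦ sq_nonneg _)
          (mul_nonneg (sq_nonneg _) (integral_nonneg fun _ ↦ gradSq_nonneg _ _))
    _ ≤ (Λ₀ ^ 2 * e) * (Lam ^ 2 * e) := by gcongr
    _ = (Lam * Λ₀ * e) ^ 2 := by ring

theorem setIntegral_fderiv_mul_comp_last (hV : IsEllipticFlux lam Lam ω Φ V)
    (hω_open : IsOpen ω) (hω : Convex ℝ ω) (hω_bdd : Bornology.IsBounded ω)
    (hΦ : ContDiffOn ℝ 1 Φ (closure (cyl ω))) (hη : DifferentiableAt ℝ η t) :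
    ∫ x' in ω, fderiv ℝ (fun y ↦ Φ y * η (y (Fin.last n))) (Fin.snoc x' t) (V (Fin.snoc x' t)) =
      η t * (∫ x' in ω, fderiv ℝ Φ (Fin.snoc x' t) (V (Fin.snoc x' t))) +
        deriv η t * ∫ x' in ω, Φ (Fin.snoc x' t) * V (Fin.snoc x' t) (Fin.last n) := by
  have hflux_int : IntegrableOn (fun x' ↦ Φ (Fin.snoc x' t) * V (Fin.snoc x' t) (Fin.last n)) ω :=
    (memLp_two_comp_snoc hω_bdd hΦ t).integrable_mul
      (hV.memLp_two_snoc hω_open hω hω_bdd hΦ t _)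
  rw [← integral_const_mul, ← integral_const_mul, ← integral_add
    ((hV.integrableOn_fderiv_snoc hω_open hω hω_bdd hΦ t).const_mul _) (hflux_int.const_mul _)]
  refine setIntegral_congr_fun hω_open.measurableSet fun x' hx' ↦ ?_
  simpa using fderiv_mul_comp_last_apply
    (differentiableAt_of_mem_cyl hω_open hΦ (snoc_mem_cyl.2 hx')) (by simpa using hη) (V _)

theorem integrableOn_tsupport_comp_last (hV : IsEllipticFlux lam Lam ω Φ V) (hω_open : IsOpen ω)
    (hω : Convex ℝ ω) (hω_bdd : Bornology.IsBounded ω)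
    (hΦ : ContDiffOn ℝ 1 Φ (closure (cyl ω))) (hη : HasCompactSupport η) :
    IntegrableOn V (cyl ω ∩ tsupport fun y ↦ η (y (Fin.last n))) :=
  (hV.integrableOn hω_open hω hω_bdd hΦ hη).mono_set
    (inter_subset_inter_right _ (tsupport_comp_subset_preimage η (continuous_apply _)))

theorem exp_mul_setIntegral_gradSq_le {D β h : ℝ} (hV : IsEllipticFlux lam Lam ω Φ V)
    (hω_open : IsOpen ω) (hω : Convex ℝ ω) (hω_bdd : Bornology.IsBounded ω)
    (hΦ : ContDiffOn ℝ 1 Φ (closure (cyl ω))) (hlam : 0 < lam) (hLam : 0 < Lam) (hΛ₀ : 0 < Λ₀)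
    (hP : PoincareInequality ω Λ₀) (hD : ∀ s, |deriv smoothTransition s| ≤ D) (hβ : 0 ≤ β)
    (hβD : 2 * D * β * (Lam * Λ₀) ≤ lam)
    (hweak : ∀ ψ : (Fin (n + 1) → ℝ) → ℝ, ContDiff ℝ 1 ψ → HasCompactSupport ψ →
      ∫ x in cyl ω, fderiv ℝ ψ x (V x) = 0)
    (hflux : ∀ t, ∫ x' in ω, V (Fin.snoc x' t) (Fin.last n) = 0) (t₁ t₂ : ℝ) (hh : 0 < h) :
    exp (β * h) * ∫ x in cyl ω ∩ {x | x (Fin.last n) ∈ Icc t₁ t₂}, gradSq Φ x ≤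
      ∫ x in cyl ω ∩ {x | x (Fin.last n) ∈ Icc (t₁ - h) (t₂ + h)}, gradSq Φ x := by
  have hgrad {I : Set ℝ} (hI : IsCompact I) := integrableOn_gradSq hω_open hω hω_bdd hΦ hI
  rw [← setIntegral_setIntegral_snoc (hgrad isCompact_Icc),
    ← setIntegral_setIntegral_snoc (hgrad isCompact_Icc)]
  have hslice {η : ℝ → ℝ} (hη : ContDiff ℝ 1 η) (t : ℝ) :=
    hV.setIntegral_fderiv_mul_comp_last hω_open hω hω_bdd hΦ (hη.differentiable one_ne_zero t)
  have hint (η : ℝ → ℝ) (hη : ContDiff ℝ 1 η) (hη_supp : HasCompactSupport η) :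
      IntegrableOn (fun x ↦ fderiv ℝ (fun y ↦ Φ y * η (y (Fin.last n))) x (V x))
        (cyl ω ∩ {x | x (Fin.last n) ∈ univ}) := by
    simpa using integrableOn_fderiv_mul_apply (isOpen_cyl hω_open) (convex_cyl hω) hΦ
      (hη.comp (contDiff_apply ℝ ℝ (Fin.last n)))
      (isCompact_closure_inter_tsupport_comp_last hω_bdd hη_supp)
      (hV.integrableOn_tsupport_comp_last hω_open hω hω_bdd hΦ hη_supp)
  refine exp_mul_setIntegral_Icc_le hlam (mul_pos hLam hΛ₀) hD hβ hβD
    (locallyIntegrable_iff.2 fun I hI ↦ integrableOn_setIntegral_snoc (hgrad hI))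
    (hV.mul_setIntegral_gradSq_le hω_open hω hω_bdd hΦ)
    (fun t ↦ hV.abs_setIntegral_mul_flux_le hω_open hω hω_bdd hΦ hLam.le hΛ₀.le hP (hflux t))
    (fun η hη hη_supp ↦ ?_) (fun η hη hη_supp ↦ ?_) t₁ t₂ hh
  · simpa only [hslice hη, integrableOn_univ] using
      integrableOn_setIntegral_snoc (hint η hη hη_supp)
  · simp only [← hslice hη]
    rw [← setIntegral_univ, setIntegral_setIntegral_snoc (hint η hη hη_supp)]
    simpa using setIntegral_fderiv_mul_apply_eq_zero (isOpen_cyl hω_open) (convex_cyl hω) hΦ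
      (hη.comp (contDiff_apply ℝ ℝ (Fin.last n)))
      (isCompact_closure_inter_tsupport_comp_last hω_bdd hη_supp)
      (hV.integrableOn_tsupport_comp_last hω_open hω hω_bdd hΦ hη_supp) hweak

end IsEllipticFlux

open Matrix in
theorem isEllipticFlux_mulVec {A : (Fin (n + 1) → ℝ) → Fin (n + 1) → Fin (n + 1) → ℝ}
    (hlam : 0 ≤ lam) (hA : Measurable A) (hsymm : ∀ x ∈ cyl ω, ∀ i j, A x i j = A x j i)
    (helliptic : ∀ x ∈ cyl ω, ∀ ξ : Fin (n + 1) → ℝ,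
      lam * ∑ i, ξ i ^ 2 ≤ ∑ i, ∑ j, ξ i * A x i j * ξ j ∧
      ∑ i, ∑ j, ξ i * A x i j * ξ j ≤ Lam * ∑ i, ξ i ^ 2) :
    IsEllipticFlux lam Lam ω Φ fun x i ↦ ∑ j, A x i j * fderiv ℝ Φ x (Pi.single j 1) where
  measurable := measurable_pi_iff.2 fun i ↦ Finset.measurable_sum _ fun j _ ↦
    (measurable_pi_iff.1 (measurable_pi_iff.1 hA i) j).mul (measurable_fderiv_apply_const ℝ Φ _)
  coercive x hx := by
    refine (helliptic x hx _).1.trans_eq ?_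
    rw [fderiv_apply_eq_sum]
    simp only [Finset.sum_mul]
    exact Finset.sum_congr rfl fun i _ ↦ Finset.sum_congr rfl fun j _ ↦ by ring
  bounded x hx := by
    have hquadratic (ξ : Fin (n + 1) → ℝ) :
        ξ ⬝ᵥ Matrix.of (A x) *ᵥ ξ = ∑ i, ∑ j, ξ i * A x i j * ξ j := by
      simp only [dotProduct, mulVec, Finset.mul_sum, mul_assoc, of_apply]
    have hsq (ξ : Fin (n + 1) → ℝ) : ξ ⬝ᵥ ξ = ∑ i, ξ i ^ 2 := by simp only [dotProduct, sq]
    have hbound := mulVec_dotProduct_mulVec_le (a := Matrix.of (A x))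
      (Matrix.IsSymm.ext fun i j ↦ hsymm x hx j i)
      (fun ξ ↦ hquadratic ξ ▸ (helliptic x hx ξ).1.trans' (by positivity))
      (fun ξ ↦ by simpa only [hquadratic, hsq] using (helliptic x hx ξ).2)
      fun j ↦ fderiv ℝ Φ x (Pi.single j 1)
    rwa [hsq, hsq] at hbound

end EllipticFlux

theorem weighted_caccioppoli_cylinder_general {n : ℕ} {ω : Set (Fin n → ℝ)} (hω_open : IsOpen ω)
    (hω : Convex ℝ ω) (hω_bdd : Bornology.IsBounded ω) {lam Lam Λ₀ : ℝ} (hlam : 0 < lam)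
    (hLam : 0 < Lam) (hΛ₀ : 0 < Λ₀) (hP : PoincareInequality ω Λ₀) :
    ∃ β > 0, ∀ (A : (Fin (n + 1) → ℝ) → Fin (n + 1) → Fin (n + 1) → ℝ)
        (Φ : (Fin (n + 1) → ℝ) → ℝ),
      Measurable A →
      (∀ x ∈ cyl ω, ∀ i j, A x i j = A x j i) →
      (∀ x ∈ cyl ω, ∀ ξ : Fin (n + 1) → ℝ,
        lam * ∑ i, ξ i ^ 2 ≤ ∑ i, ∑ j, ξ i * A x i j * ξ j ∧
        ∑ i, ∑ j, ξ i * A x i j * ξ j ≤ Lam * ∑ i, ξ i ^ 2) →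
      ContDiffOn ℝ 1 Φ (closure (cyl ω)) →
      (∀ ψ : (Fin (n + 1) → ℝ) → ℝ, ContDiff ℝ 1 ψ → HasCompactSupport ψ →
        ∫ x in cyl ω, ∑ i, (∑ j, A x i j * fderiv ℝ Φ x (Pi.single j 1)) *
          fderiv ℝ ψ x (Pi.single i 1) = 0) →
      (∀ t : ℝ, ∫ x' in ω, ∑ j, A (Fin.snoc x' t) (Fin.last n) j *
        fderiv ℝ Φ (Fin.snoc x' t) (Pi.single j 1) = 0) →
      ∀ t₁ t₂ h : ℝ, 0 < h →
        exp (β * h) * ∫ x in cyl ω ∩ {x | x (Fin.last n) ∈ Icc t₁ t₂}, gradSq Φ x ≤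
          ∫ x in cyl ω ∩ {x | x (Fin.last n) ∈ Icc (t₁ - h) (t₂ + h)}, gradSq Φ x := by
  obtain ⟨D, hD_pos, hD⟩ := exists_forall_abs_deriv_smoothTransition_le
  refine ⟨lam / (2 * D * (Lam * Λ₀)), by positivity,
    fun A Φ hA hsymm helliptic hΦ hweak hflux t₁ t₂ h hh ↦ ?_⟩
  have hV := isEllipticFlux_mulVec (Φ := Φ) hlam.le hA hsymm helliptic
  exact hV.exp_mul_setIntegral_gradSq_le hω_open hω hω_bdd hΦ hlam hLam hΛ₀ hP hD
    (by positivity) (le_of_eq (by field_simp))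
    (fun ψ hψ hψ_supp ↦ (integral_congr_ae (.of_forall fun x ↦ fderiv_apply_eq_sum ψ x _)).trans
      (hweak ψ hψ hψ_supp)) hflux t₁ t₂ hh

theorem isOpen_diskSet : IsOpen diskSet :=
  isOpen_lt (by fun_prop) continuous_const

theorem convex_diskSet : Convex ℝ diskSet := by
  have hsq (i : Fin 2) : ConvexOn ℝ univ fun x' : Fin 2 → ℝ ↦ x' i ^ 2 :=
    (even_two.convexOn_pow (𝕜 := ℝ)).comp_linearMap (LinearMap.proj (φ := fun _ ↦ ℝ) i)
  simpa only [diskSet, mem_univ, true_and, Pi.add_apply] using ((hsq 0).add (hsq 1)).convex_lt 1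

theorem isBounded_diskSet : Bornology.IsBounded diskSet :=
  Metric.isBounded_closedBall.subset fun x' hx' ↦ mem_closedBall_zero_iff.2 <|
    (norm_le_sqrt_sum_sq x').trans <| sqrt_le_one.2 <| by
      rw [Fin.sum_univ_two]
      exact le_of_lt hx'

theorem closure_cyl_diskSet_subset : closure (cyl diskSet) ⊆ cylZc :=
  closure_minimal (fun x (hx : x 0 ^ 2 + x 1 ^ 2 < 1) ↦ hx.le)
    (isClosed_le (by fun_prop) continuous_const)

/-- the weighted Caccioppoli estimate in the infinite cylinder: for a
weak solution of div(A∇Φ) = 0 with conormal boundary condition, symmetric uniformly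
elliptic A, and zero flux through every cross-section, one has
e^{βh} ∫_{t₁ ≤ x₃ ≤ t₂} |∇Φ|² ≤ ∫_{t₁−h ≤ x₃ ≤ t₂+h} |∇Φ|²,
with β depending only on λ, Λ and the Poincaré constant Λ₀ of the disk. -/
theorem weighted_caccioppoli_cylinder
    (lam Lam Λ₀ : ℝ) (hlam : 0 < lam) (hlamLam : lam ≤ Lam) (hΛ₀ : 0 < Λ₀)
    -- Poincaré inequality on the unit disk with constant Λ₀
    (hPoincare : ∀ w : (Fin 2 → ℝ) → ℝ, ContDiffOn ℝ 1 w (closure diskSet) →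
      ∫ x' in diskSet,
          (w x' - (∫ y' in diskSet, w y') / (volume diskSet).toReal) ^ 2
        ≤ Λ₀ ^ 2 * ∫ x' in diskSet, ∑ i, (fderiv ℝ w x' (Pi.single i 1)) ^ 2) :
    ∃ β > (0:ℝ), ∀ (A : (Fin 3 → ℝ) → Fin 3 → Fin 3 → ℝ) (Φ : (Fin 3 → ℝ) → ℝ),
      Measurable A →
      (∀ x ∈ cylZc, ∀ i j : Fin 3, A x i j = A x j i) →
      (∀ x ∈ cylZc, ∀ ξ : Fin 3 → ℝ,
        lam * normSq3 ξ ≤ ∑ i, ∑ j, ξ i * A x i j * ξ j ∧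
        ∑ i, ∑ j, ξ i * A x i j * ξ j ≤ Lam * normSq3 ξ) →
      ContDiffOn ℝ 1 Φ cylZc →
      -- weak form of div(A∇Φ) = 0 with the conormal (slip) boundary condition
      (∀ ψ : (Fin 3 → ℝ) → ℝ, ContDiff ℝ 1 ψ → HasCompactSupport ψ →
        ∫ x in cylZ, ∑ i, (∑ j, A x i j * grad3 Φ x j) * grad3 ψ x i = 0) →
      -- zero flux through every cross-section
      (∀ t : ℝ, ∫ x' in diskSet,
        ∑ j, A (Fin.snoc x' t) 2 j * grad3 Φ (Fin.snoc x' t) j = 0) →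
      ∀ t₁ t₂ h : ℝ, t₁ ≤ t₂ → 0 < h →
        Real.exp (β * h) *
            ∫ x in cylZ ∩ {x | t₁ ≤ x 2 ∧ x 2 ≤ t₂}, normSq3 (grad3 Φ x)
          ≤ ∫ x in cylZ ∩ {x | t₁ - h ≤ x 2 ∧ x 2 ≤ t₂ + h}, normSq3 (grad3 Φ x) := by
  obtain ⟨β, hβ, hdecay⟩ := weighted_caccioppoli_cylinder_general isOpen_diskSet convex_diskSet
    isBounded_diskSet hlam (hlam.trans_le hlamLam) hΛ₀ hPoincare
  have hcyl : cyl diskSet ⊆ cylZc := subset_closure.trans closure_cyl_diskSet_subset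
  exact ⟨β, hβ, fun A Φ hA hsymm helliptic hΦ hweak hflux t₁ t₂ h _ hh ↦ hdecay A Φ hA
    (fun x hx ↦ hsymm x (hcyl hx)) (fun x hx ↦ helliptic x (hcyl hx))
    (hΦ.mono closure_cyl_diskSet_subset) hweak hflux t₁ t₂ h hh⟩
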